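/- Let I be the ideal of R = ℚ[x,y,z] generated by z³, yz², xz², y²z, xy², x²y, x³, y⁴. Then I has height 3, the minimal number of generators of I is 8, and the quotient ring R/I is a finite-dimensional ℚ-vector space. -/

import Mathlib

/-!
Every prime over `I` contains powers of the three variables, hence contains the variables, and so
is the irrelevant maximal ideal `(x, y, z)`. Its height is at most `dim ℚ[x,y,z] = 3`, and at
least `3` because of the chain `0 ⊂ (x) ⊂ (x, y) ⊂ (x, y, z)`. The quotient is generated as an
algebra by the nilpotent (hence integral) classes of the variables, so it is finite over `ℚ`.

For the number of generators, a graded Nakayama argument is used in an explicit form. No generator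
divides another, so the linear map `coeffMap` reading off the coefficients at the eight generating
monomials satisfies `coeffMap (a * f) = a(0) • coeffMap f` for `f ∈ I`. Hence a generating set of
the ideal `I` maps to a spanning set of `coeffMap I = ℚ⁸`, and has at least eight elements.
-/

open MvPolynomial

/-- The height of an ideal: the infimum of the heights of prime ideals containing it. -/
noncomputable def idealHeight {R : Type*} [CommRing R] (I : Ideal R) : ℕ∞ :=
  ⨅ p ∈ {p : PrimeSpectrum R | I ≤ p.asIdeal}, Order.height p

/-- The minimal number of generators of an ideal: the smallest cardinality of a
set of elements of the ring generating it as an ideal. -/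
noncomputable def minNumGens {R : Type*} [CommRing R] (I : Ideal R) : ℕ :=
  sInf {n : ℕ | ∃ s : Finset R, s.card = n ∧ Ideal.span (s : Set R) = I}

noncomputable abbrev x : MvPolynomial (Fin 3) ℚ := X 0
noncomputable abbrev y : MvPolynomial (Fin 3) ℚ := X 1
noncomputable abbrev z : MvPolynomial (Fin 3) ℚ := X 2

/-- Exponent vectors of the eight generators of the ideal. -/
def genExp : Fin 8 → Fin 3 → ℕ :=
  ![![0, 0, 3], ![0, 1, 2], ![1, 0, 2], ![0, 2, 1], ![1, 2, 0], ![2, 1, 0], ![3, 0, 0], ![0, 4, 0]]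

/-- The eight monomial generators. -/
noncomputable def gen (j : Fin 8) : MvPolynomial (Fin 3) ℚ :=
  monomial (Finsupp.equivFunOnFinite.symm (genExp j)) 1

/-- The coefficients of a polynomial at the eight generating monomials. -/
noncomputable def coeffMap : MvPolynomial (Fin 3) ℚ →ₗ[ℚ] (Fin 8 → ℚ) :=
  LinearMap.pi fun i => lcoeff ℚ (Finsupp.equivFunOnFinite.symm (genExp i))

lemma genExp_le_iff (i j : Fin 8) : genExp j ≤ genExp i ↔ j = i := by
  simp only [Pi.le_def]
  revert i j
  decide

lemma coeffMap_mul_gen (a : MvPolynomial (Fin 3) ℚ) (j : Fin 8) :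
    coeffMap (a * gen j) = constantCoeff a • Pi.single j 1 := by
  ext i
  have hle : (Finsupp.equivFunOnFinite.symm (genExp j) : Fin 3 →₀ ℕ) ≤
      Finsupp.equivFunOnFinite.symm (genExp i) ↔ j = i := genExp_le_iff i j
  simp only [coeffMap, gen, LinearMap.pi_apply, lcoeff_apply, coeff_mul_monomial', hle]
  by_cases h : j = i
  · subst h; simp [constantCoeff_eq]
  · simp [h, Ne.symm h]

lemma coeffMap_gen (j : Fin 8) : coeffMap (gen j) = Pi.single j 1 := by
  simpa using coeffMap_mul_gen 1 j

lemma coeffMap_mul_of_mem {f : MvPolynomial (Fin 3) ℚ} (hf : f ∈ Ideal.span (Set.range gen))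
    (a : MvPolynomial (Fin 3) ℚ) : coeffMap (a * f) = constantCoeff a • coeffMap f := by
  induction hf using Submodule.span_induction generalizing a with
  | mem f hf =>
    obtain ⟨j, rfl⟩ := hf
    rw [coeffMap_mul_gen, coeffMap_gen]
  | zero => simp
  | add f g _ _ hf hg => rw [mul_add, map_add, hf, hg, map_add, smul_add]
  | smul b f _ hf =>
    rw [smul_eq_mul, ← mul_assoc, hf, hf, map_mul, mul_smul]

/-- Any generating set of the ideal has at least eight elements, since it maps to a spanning set
of `ℚ⁸` under `coeffMap`. -/
lemma eight_le_card (s : Finset (MvPolynomial (Fin 3) ℚ))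
    (hs : Ideal.span (s : Set (MvPolynomial (Fin 3) ℚ)) = Ideal.span (Set.range gen)) :
    8 ≤ s.card := by
  classical
  have key : ∀ f ∈ Ideal.span (s : Set (MvPolynomial (Fin 3) ℚ)),
      coeffMap f ∈ Submodule.span ℚ ((s.image coeffMap : Finset (Fin 8 → ℚ)) : Set _) := by
    intro f hf
    induction hf using Submodule.span_induction with
    | mem f hf => exact Submodule.subset_span (by simpa using ⟨f, hf, rfl⟩)
    | zero => simp
    | add f g _ _ hf hg => rw [map_add]; exact add_mem hf hg
    | smul b f hmem hf =>
      rw [smul_eq_mul, coeffMap_mul_of_mem (hs ▸ hmem)]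
      exact Submodule.smul_mem _ _ hf
  have htop : Submodule.span ℚ ((s.image coeffMap : Finset (Fin 8 → ℚ)) : Set (Fin 8 → ℚ)) = ⊤ := by
    rw [eq_top_iff, ← (Pi.basisFun ℚ (Fin 8)).span_eq, Submodule.span_le]
    rintro _ ⟨j, rfl⟩
    rw [Pi.basisFun_apply, ← coeffMap_gen]
    exact key _ (hs ▸ Ideal.subset_span ⟨j, rfl⟩)
  have h := finrank_span_finset_le_card (R := ℚ) (s.image coeffMap)
  rw [Set.finrank, htop, finrank_top, Module.finrank_fin_fun] at h
  exact h.trans Finset.card_image_le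

lemma range_gen : Set.range gen = {z^3, y*z^2, x*z^2, y^2*z, x*y^2, x^2*y, x^3, y^4} := by
  have h : ∀ j, gen j = X 0 ^ genExp j 0 * X 1 ^ genExp j 1 * X 2 ^ genExp j 2 := by
    intro j
    rw [gen, monomial_eq, Finsupp.prod_fintype _ _ (by simp)]
    simp [Fin.prod_univ_three]
  have h' : gen = ![z^3, y*z^2, x*z^2, y^2*z, x*y^2, x^2*y, x^3, y^4] := by
    funext j
    rw [h]
    fin_cases j <;> simp [genExp]
  rw [h']
  simp only [Matrix.range_cons, Matrix.range_empty, Set.union_empty, Set.singleton_union]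

/-- The prime ideal generated by the first `k` variables, presented as the kernel of the
substitution sending these variables to `0`. -/
noncomputable def varPrime (k : ℕ) : PrimeSpectrum (MvPolynomial (Fin 3) ℚ) :=
  ⟨RingHom.ker (aeval fun i : Fin 3 => if (i : ℕ) < k then 0 else X i :
    MvPolynomial (Fin 3) ℚ →ₐ[ℚ] MvPolynomial (Fin 3) ℚ), RingHom.ker_isPrime _⟩

lemma X_mem_varPrime (k : ℕ) (i : Fin 3) : X i ∈ (varPrime k).asIdeal ↔ (i : ℕ) < k := by
  simp [varPrime, RingHom.mem_ker]

lemma varPrime_le_succ (k : ℕ) : varPrime k ≤ varPrime (k + 1) := by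
  intro f hf
  simp only [varPrime, RingHom.mem_ker] at hf ⊢
  -- the substitution killing `k + 1` variables factors through the one killing `k`
  have hcomp : (aeval fun i : Fin 3 => if (i : ℕ) < k + 1 then 0 else X i :
      MvPolynomial (Fin 3) ℚ →ₐ[ℚ] MvPolynomial (Fin 3) ℚ) =
      (aeval fun i : Fin 3 => if (i : ℕ) < k + 1 then 0 else X i :
        MvPolynomial (Fin 3) ℚ →ₐ[ℚ] MvPolynomial (Fin 3) ℚ).comp
      (aeval fun i : Fin 3 => if (i : ℕ) < k then 0 else X i) := by
    ext1 i
    by_cases h : (i : ℕ) < k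
    · simp [h, h.le]
    · simp [h]
  rw [hcomp, AlgHom.comp_apply, hf, map_zero]

lemma varPrime_lt_succ (k : Fin 3) : varPrime k < varPrime (k + 1) := by
  refine lt_of_le_of_ne (varPrime_le_succ k) fun h => ?_
  have h1 := (X_mem_varPrime (k + 1) k).2 (Nat.lt_succ_self _)
  rw [← h, X_mem_varPrime] at h1
  exact lt_irrefl _ h1

lemma height_varPrime_three : Order.height (varPrime 3) = 3 := by
  apply le_antisymm
  · have h := Order.height_le_krullDim (varPrime 3)
    have hd : Order.krullDim (PrimeSpectrum (MvPolynomial (Fin 3) ℚ)) = 3 := by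
      have := MvPolynomial.ringKrullDim_of_isNoetherianRing (R := ℚ) (ι := Fin 3)
      rw [ringKrullDim_eq_zero_of_field, zero_add, Nat.card_fin] at this
      exact this
    rw [hd] at h
    exact WithBot.coe_le_coe.1 h
  · have h0 := Order.height_add_one_le (varPrime_lt_succ 0)
    have h1 := Order.height_add_one_le (varPrime_lt_succ 1)
    have h2 := Order.height_add_one_le (varPrime_lt_succ 2)
    calc (3 : ℕ∞) = 0 + 1 + 1 + 1 := by norm_num
      _ ≤ Order.height (varPrime 0) + 1 + 1 + 1 := by gcongr; exact zero_le
      _ ≤ Order.height (varPrime 1) + 1 + 1 := by gcongr; exact h0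
      _ ≤ Order.height (varPrime 2) + 1 := by gcongr; exact h1
      _ ≤ Order.height (varPrime 3) := h2

lemma varPrime_three_asIdeal : (varPrime 3).asIdeal = RingHom.ker (constantCoeff (R := ℚ)) := by
  ext f
  have h : (fun i : Fin 3 => if (i : ℕ) < 3 then (0 : MvPolynomial (Fin 3) ℚ) else X i) = 0 := by
    funext i; simp [i.2]
  rw [varPrime, RingHom.mem_ker, RingHom.mem_ker, h, aeval_zero, algebraMap_eq, C_eq_zero]

lemma eq_varPrime_three (p : PrimeSpectrum (MvPolynomial (Fin 3) ℚ))
    (hp : ∀ i, X i ∈ p.asIdeal) : p = varPrime 3 := by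
  have hmax : (varPrime 3).asIdeal.IsMaximal := by
    rw [varPrime_three_asIdeal]
    exact RingHom.ker_isMaximal_of_surjective _ fun c => ⟨C c, constantCoeff_C _ c⟩
  have hle : (varPrime 3).asIdeal ≤ p.asIdeal := by
    intro f hf
    rw [varPrime_three_asIdeal, RingHom.mem_ker, constantCoeff_eq] at hf
    have hspan : f ∈ Ideal.span (X '' (Set.univ : Set (Fin 3))) := by
      rw [mem_ideal_span_X_image]
      intro m hm
      by_contra! hzero
      have hm0 : m = 0 := Finsupp.ext fun i => hzero i (Set.mem_univ i)
      exact (mem_support_iff.1 hm) (hm0 ▸ hf)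
    refine Ideal.span_le.2 ?_ hspan
    rintro _ ⟨i, -, rfl⟩
    exact hp i
  exact PrimeSpectrum.ext (hmax.eq_of_le p.2.ne_top hle).symm

theorem stmt_18 (I : Ideal (MvPolynomial (Fin 3) ℚ))
    (hI : I = Ideal.span {z^3, y*z^2, x*z^2, y^2*z, x*y^2, x^2*y, x^3, y^4}) :
    idealHeight I = 3 ∧ minNumGens I = 8 ∧
    FiniteDimensional ℚ (MvPolynomial (Fin 3) ℚ ⧸ I) := by
  classical
  have hX : ∀ i : Fin 3, (X i : MvPolynomial (Fin 3) ℚ) ^ 4 ∈ I := by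
    intro i
    have hx : x ^ 3 ∈ I := hI ▸ Ideal.subset_span (by simp)
    have hy : y ^ 4 ∈ I := hI ▸ Ideal.subset_span (by simp)
    have hz : z ^ 3 ∈ I := hI ▸ Ideal.subset_span (by simp)
    fin_cases i
    · exact I.pow_mem_of_pow_mem hx (show 3 ≤ 4 by norm_num)
    · exact hy
    · exact I.pow_mem_of_pow_mem hz (show 3 ≤ 4 by norm_num)
  refine ⟨?_, ?_, ?_⟩
  · have hset : {p : PrimeSpectrum (MvPolynomial (Fin 3) ℚ) | I ≤ p.asIdeal} = {varPrime 3} := by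
      ext p
      refine ⟨fun hp => eq_varPrime_three p fun i => p.2.mem_of_pow_mem 4 (hp (hX i)), ?_⟩
      rintro rfl
      rw [Set.mem_ofPred_eq, hI, Ideal.span_le, varPrime_three_asIdeal]
      intro f hf
      rcases hf with rfl | rfl | rfl | rfl | rfl | rfl | rfl | rfl <;> simp [RingHom.mem_ker]
    rw [idealHeight, hset]
    simpa using height_varPrime_three
  · rw [← range_gen] at hI
    have hmem : (Finset.univ.image gen).card ∈
        {n : ℕ | ∃ s : Finset (MvPolynomial (Fin 3) ℚ), s.card = n ∧
          Ideal.span (s : Set (MvPolynomial (Fin 3) ℚ)) = I} := ⟨_, rfl, by simp [hI]⟩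
    apply le_antisymm
    · exact (Nat.sInf_le hmem).trans (Finset.card_image_le.trans (by simp))
    · obtain ⟨s, hs, hsI⟩ := Nat.sInf_mem ⟨_, hmem⟩
      rw [minNumGens, ← hs]
      exact eight_le_card s (hsI.trans hI)
  · let q := Ideal.Quotient.mkₐ ℚ I
    have hfg := fg_adjoin_of_finite (R := ℚ) (Set.finite_range fun i : Fin 3 => q (X i)) (by
      rintro _ ⟨i, rfl⟩
      refine IsIntegral.of_pow (n := 4) (by norm_num) ?_
      have : q (X i) ^ 4 = 0 := by
        rw [← map_pow]
        exact Ideal.Quotient.eq_zero_iff_mem.2 (hX i)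
      rw [this]
      exact isIntegral_zero)
    have htop : Algebra.adjoin ℚ (Set.range fun i : Fin 3 => q (X i)) = ⊤ := by
      have : (Set.range fun i : Fin 3 => q (X i)) = q '' Set.range X := by
        rw [← Set.range_comp]; rfl
      rw [this, ← AlgHom.map_adjoin, adjoin_range_X, Algebra.map_top, AlgHom.range_eq_top]
      exact Ideal.Quotient.mkₐ_surjective ℚ I
    rw [htop, Algebra.top_toSubmodule] at hfg
    exact ⟨hfg⟩
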